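/- Let c and k be positive integers with c > 1. For each prime p with ord_p(c) dividing k, write w_p = v_p(k), and f_p = v_2(c^2 - 1) - 1 if p = 2, c ≡ 3 (mod 4), and k is even, and f_p = v_p(c^{ord_p(c)} - 1) otherwise. Then (1, c^k - 1, c^k) is an abc triple if and only if at least one of the following holds: (i) there exists a prime p > rad(c) such that ord_p(c) divides k and either f_p ≥ 2 or w_p ≥ 1; (ii) there exists a prime p < rad(c) such that ord_p(c) divides k and f_p + w_p - 1 ≥ m_p, where m_p is the least positive integer with p^{m_p} > rad(c); (iii) for each prime p such that ord_p(c) divides k there exists a non-negative integer a_p ≤ f_p + w_p - 1 such that ∏_{ord_p(c) | k} p^{a_p} > rad(c). -/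

import Mathlib

open scoped Classical

/-- The radical of a natural number: the product of its distinct prime factors. -/
def rad (n : ℕ) : ℕ := ∏ p ∈ n.primeFactors, p

/-- The cosocle of a natural number: `n / rad n`. -/
def cosocle (n : ℕ) : ℕ := n / rad n

/-- `(a, b, c)` is an abc triple: `a, b, c` are relatively prime positive integers with
`a + b = c` and `rad (a*b*c) < c`. -/
def IsABCTriple (a b c : ℕ) : Prop :=
  0 < a ∧ 0 < b ∧ 0 < c ∧ a + b = c ∧
    Nat.Coprime a b ∧ Nat.Coprime a c ∧ Nat.Coprime b c ∧ rad (a * b * c) < c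

/-- The exponent `f_p` from the paper. -/
noncomputable def fp (c k p : ℕ) : ℕ :=
  if p = 2 ∧ c % 4 = 3 ∧ Even k then padicValNat 2 (c ^ 2 - 1) - 1
  else padicValNat p (c ^ orderOf (c : ZMod p) - 1)

/-- The exponent `w_p = v_p(k)` from the paper. -/
def wp (k p : ℕ) : ℕ := padicValNat p k

/-- The set of primes `p` for which `ord_p(c)` divides `k`; all such primes divide
`c^k - 1`, hence are smaller than `c^k`. -/
noncomputable def ordSet (c k : ℕ) : Finset ℕ :=
  (Finset.range (c ^ k)).filter (fun p => p.Prime ∧ orderOf (c : ZMod p) ∣ k)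

/-!
Since `c ^ k - 1` and `c ^ k` are coprime and `rad (c ^ k) = rad c`, the abc condition
`rad (c ^ k - 1) * rad c < c ^ k` says that `rad c < cosocle (c ^ k - 1)`; equality is excluded by
coprimality. The primes dividing `c ^ k - 1` are those with `ord_p(c) ∣ k`, and by lifting the
exponent `v_p(c ^ k - 1) = f_p + w_p`, so the cosocle is `∏ p ^ (f_p + w_p - 1)`. This is the
largest product allowed in (iii), while (i) and (ii) each say that a single factor exceeds `rad c`.
-/

open UniqueFactorizationMonoid (radical)

section Radical

lemma rad_eq_radical (n : ℕ) : rad n = radical n :=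
  Nat.radical_eq_prod_primeFactors.symm

lemma rad_pos (n : ℕ) : 0 < rad n :=
  rad_eq_radical n ▸ Nat.radical_pos n

lemma rad_dvd_self (n : ℕ) : rad n ∣ n :=
  rad_eq_radical n ▸ UniqueFactorizationMonoid.radical_dvd_self

lemma rad_pow (n : ℕ) {k : ℕ} (hk : k ≠ 0) : rad (n ^ k) = rad n := by
  simp only [rad_eq_radical, UniqueFactorizationMonoid.radical_pow n hk]

lemma rad_mul_of_coprime {m n : ℕ} (h : m.Coprime n) : rad (m * n) = rad m * rad n := by
  simp only [rad_eq_radical,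
    UniqueFactorizationMonoid.radical_mul (Nat.coprime_iff_isRelPrime.mp h)]

lemma cosocle_dvd_self (n : ℕ) : cosocle n ∣ n :=
  Nat.div_dvd_of_dvd (rad_dvd_self n)

lemma cosocle_eq_prod_primeFactors {n : ℕ} (hn : n ≠ 0) :
    cosocle n = ∏ p ∈ n.primeFactors, p ^ (padicValNat p n - 1) := by
  refine Nat.div_eq_of_eq_mul_left (rad_pos n) ?_
  rw [rad, ← Finset.prod_mul_distrib]
  nth_rewrite 1 [← Nat.prod_factorization_pow_eq_self hn]
  refine Finset.prod_congr n.support_factorization fun p hp => ?_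
  have hp_prime := Nat.prime_of_mem_primeFactors hp
  have := Fact.mk hp_prime
  have hval : 1 ≤ padicValNat p n :=
    one_le_padicValNat_of_dvd hn (Nat.dvd_of_mem_primeFactors hp)
  rw [Nat.factorization_def n hp_prime, ← pow_succ, Nat.sub_add_cancel hval]

lemma pow_padicValNat_sub_one_le_cosocle {n p : ℕ} (hp : p ∈ n.primeFactors) :
    p ^ (padicValNat p n - 1) ≤ cosocle n := by
  rw [cosocle_eq_prod_primeFactors (Nat.mem_primeFactors.mp hp).2.2]
  exact Finset.single_le_prod' (f := fun q => q ^ (padicValNat q n - 1))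
    (fun q hq => Nat.one_le_pow _ _ (Nat.pos_of_mem_primeFactors hq)) hp

lemma rad_succ_ne_cosocle {b : ℕ} (hb : 0 < b) : rad (b + 1) ≠ cosocle b := by
  intro heq
  have hsucc : (b + 1).Coprime b := Nat.coprime_self_add_left.mpr b.coprime_one_left
  have hcop : (rad (b + 1)).Coprime (cosocle b) :=
    (hsucc.coprime_dvd_left (rad_dvd_self (b + 1))).coprime_dvd_right (cosocle_dvd_self b)
  rw [← heq, Nat.coprime_self, rad_eq_radical, Nat.radical_eq_one_iff] at hcop
  omega

theorem isABCTriple_one_iff {b : ℕ} (hb : 0 < b) :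
    IsABCTriple 1 b (b + 1) ↔ rad (b + 1) < cosocle b := by
  have hcop : b.Coprime (b + 1) := Nat.coprime_self_add_right.mpr b.coprime_one_right
  calc IsABCTriple 1 b (b + 1)
    _ ↔ rad (1 * b * (b + 1)) < b + 1 :=
      ⟨fun ⟨_, _, _, _, _, _, _, hrad⟩ => hrad, fun hrad => ⟨one_pos, hb, b.succ_pos,
        add_comm 1 b, b.coprime_one_left, (b + 1).coprime_one_left, hcop, hrad⟩⟩
    _ ↔ rad (b + 1) * rad b ≤ b := by
      rw [one_mul, rad_mul_of_coprime hcop, mul_comm, Nat.lt_succ_iff]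
    _ ↔ rad (b + 1) ≤ cosocle b := (Nat.le_div_iff_mul_le (rad_pos b)).symm
    _ ↔ rad (b + 1) < cosocle b := (rad_succ_ne_cosocle hb).le_iff_lt

end Radical

section Order

variable {c k n p : ℕ}

lemma orderOf_natCast_dvd_iff (hc : 0 < c) : orderOf (c : ZMod n) ∣ k ↔ n ∣ c ^ k - 1 := by
  rw [orderOf_dvd_iff_pow_eq_one, ← CharP.cast_eq_zero_iff (ZMod n) n,
    Nat.cast_sub (Nat.one_le_pow k c hc), Nat.cast_pow, Nat.cast_one, sub_eq_zero]

lemma not_dvd_of_orderOf_natCast_pos (hp : p.Prime) (h : 0 < orderOf (c : ZMod p)) : ¬p ∣ c := by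
  have := Fact.mk hp
  intro hpc
  rw [(CharP.cast_eq_zero_iff (ZMod p) p c).mpr hpc, orderOf_zero] at h
  exact h.false

lemma not_dvd_orderOf_natCast (hp : p.Prime) (h : 0 < orderOf (c : ZMod p)) :
    ¬p ∣ orderOf (c : ZMod p) := by
  have := Fact.mk hp
  have hc : (c : ZMod p) ≠ 0 :=
    (CharP.cast_eq_zero_iff (ZMod p) p c).not.mpr (not_dvd_of_orderOf_natCast_pos hp h)
  have hle := Nat.le_of_dvd (Nat.sub_pos_of_lt hp.one_lt) (ZMod.orderOf_dvd_card_sub_one hc)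
  exact Nat.not_dvd_of_pos_of_lt h (hle.trans_lt (Nat.sub_lt hp.pos one_pos))

lemma ordSet_eq_primeFactors (hc : 0 < c) (k : ℕ) : ordSet c k = (c ^ k - 1).primeFactors := by
  ext p
  simp only [ordSet, Finset.mem_filter, Finset.mem_range, Nat.mem_primeFactors,
    orderOf_natCast_dvd_iff hc]
  constructor
  · rintro ⟨hlt, hp, hdvd⟩
    exact ⟨hp, hdvd, (Nat.sub_pos_of_lt (hp.one_lt.trans hlt)).ne'⟩
  · rintro ⟨hp, hdvd, hne⟩
    have hle := Nat.le_of_dvd (Nat.pos_of_ne_zero hne) hdvd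
    exact ⟨by omega, hp, hdvd⟩

end Order

section Valuation

variable {c k p : ℕ}

lemma padicValNat_pow_sub_pow_of_not_dvd {x y n : ℕ} (hp : p.Prime) (hyx : y < x)
    (hxy : p ∣ x - y) (hx : ¬p ∣ x) (hn : ¬p ∣ n) :
    padicValNat p (x ^ n - y ^ n) = padicValNat p (x - y) := by
  have := Fact.mk hp
  have hn0 : n ≠ 0 := fun h => hn (h ▸ dvd_zero p)
  have hpow : y ^ n < x ^ n := Nat.pow_lt_pow_left hyx hn0
  have hmult := emultiplicity_pow_sub_pow_of_prime (Nat.prime_iff_prime_int.mp hp)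
    (x := (x : ℤ)) (y := y) (n := n) (by rw [← Nat.cast_sub hyx.le]; exact_mod_cast hxy)
    (by exact_mod_cast hx) (by exact_mod_cast hn)
  rw [← Nat.cast_pow, ← Nat.cast_pow, ← Nat.cast_sub hpow.le, ← Nat.cast_sub hyx.le,
    Int.natCast_emultiplicity, Int.natCast_emultiplicity,
    ← padicValNat_eq_emultiplicity (Nat.sub_ne_zero_of_lt hpow),
    ← padicValNat_eq_emultiplicity (Nat.sub_ne_zero_of_lt hyx)] at hmult
  exact_mod_cast hmult

lemma padicValNat_two_eq_one_of_mod_four_eq_two {n : ℕ} (h : n % 4 = 2) :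
    padicValNat 2 n = 1 := by
  obtain ⟨m, rfl⟩ : 2 ∣ n := by omega
  rw [padicValNat.mul two_ne_zero (by omega), padicValNat.self one_lt_two,
    padicValNat.eq_zero_of_not_dvd (by omega)]

lemma padicValNat_two_pow_sub_one_of_even (hc : 1 < c) (hodd : ¬2 ∣ c) (hk : k ≠ 0)
    (heven : Even k) :
    padicValNat 2 (c ^ k - 1) + 1 = padicValNat 2 (c ^ 2 - 1) + padicValNat 2 k := by
  have hLTE := padicValNat.pow_two_sub_one hc hodd hk heven
  have hLTE_two := padicValNat.pow_two_sub_one hc hodd two_ne_zero even_two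
  rw [padicValNat.self one_lt_two] at hLTE_two
  omega

lemma padicValNat_pow_sub_one_of_odd (hp : p.Prime) (hpodd : Odd p) (hc : 1 < c) (hk : k ≠ 0)
    (h : orderOf (c : ZMod p) ∣ k) :
    padicValNat p (c ^ k - 1) =
      padicValNat p (c ^ orderOf (c : ZMod p) - 1) + padicValNat p k := by
  have := Fact.mk hp
  have hd : 0 < orderOf (c : ZMod p) := Nat.pos_of_dvd_of_pos h (Nat.pos_of_ne_zero hk)
  have hpd : p ∣ c ^ orderOf (c : ZMod p) - 1 :=
    (orderOf_natCast_dvd_iff (zero_lt_one.trans hc)).mp dvd_rfl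
  have hpc : ¬p ∣ c ^ orderOf (c : ZMod p) :=
    mt hp.dvd_of_dvd_pow (not_dvd_of_orderOf_natCast_pos hp hd)
  have hval := padicValNat.eq_zero_of_not_dvd (not_dvd_orderOf_natCast hp hd)
  -- `k = d * m` with `p ∤ d`, and the exponent is lifted from `c ^ d` to `(c ^ d) ^ m`.
  generalize orderOf (c : ZMod p) = d at *
  obtain ⟨m, rfl⟩ := h
  have hm : m ≠ 0 := right_ne_zero_of_mul hk
  have hLTE := padicValNat.pow_sub_pow hpodd (Nat.one_lt_pow hd.ne' hc) hpd hpc hm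
  rw [one_pow, ← pow_mul] at hLTE
  rw [hLTE, padicValNat.mul hd.ne' hm, hval, zero_add]

lemma padicValNat_two_pow_sub_one (hc : 1 < c) (hodd : ¬2 ∣ c) (hk : k ≠ 0) :
    padicValNat 2 (c ^ k - 1) = fp c k 2 + wp k 2 := by
  have hdvd : 2 ∣ c - 1 := by omega
  have hord : orderOf (c : ZMod 2) = 1 := by
    rw [← Nat.dvd_one, orderOf_natCast_dvd_iff (zero_lt_one.trans hc), pow_one]
    exact hdvd
  rw [fp, wp, hord, pow_one]
  by_cases heven : Even k
  · split_ifs with hcase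
    · have hval := padicValNat_two_pow_sub_one_of_even hc hodd hk heven
      have hge := padicValNat.pow_two_sub_one_ge hc hodd two_ne_zero even_two
      omega
    · have hmod : (c + 1) % 4 = 2 := by
        have : c % 4 ≠ 3 := fun h => hcase ⟨rfl, h, heven⟩
        omega
      have hLTE := padicValNat.pow_two_sub_one hc hodd hk heven
      rw [padicValNat_two_eq_one_of_mod_four_eq_two hmod] at hLTE
      omega
  · have hk2 : ¬2 ∣ k := mt even_iff_two_dvd.mpr heven
    have hval := padicValNat_pow_sub_pow_of_not_dvd Nat.prime_two hc hdvd hodd hk2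
    rw [one_pow] at hval
    rw [if_neg (fun h => heven h.2.2), hval, padicValNat.eq_zero_of_not_dvd hk2, add_zero]

theorem padicValNat_pow_sub_one_eq_fp_add_wp (hp : p.Prime) (hc : 1 < c) (hk : k ≠ 0)
    (h : orderOf (c : ZMod p) ∣ k) : padicValNat p (c ^ k - 1) = fp c k p + wp k p := by
  obtain rfl | hpodd := hp.eq_two_or_odd'
  · have hord := Nat.pos_of_dvd_of_pos h (Nat.pos_of_ne_zero hk)
    exact padicValNat_two_pow_sub_one hc (not_dvd_of_orderOf_natCast_pos hp hord) hk
  · have hp2 : p ≠ 2 := hpodd.ne_two_of_dvd_nat dvd_rfl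
    rw [fp, wp, if_neg (fun hcase => hp2 hcase.1),
      padicValNat_pow_sub_one_of_odd hp hpodd hc hk h]

lemma fp_pos (hp : p.Prime) (hc : 1 < c) (hord : 0 < orderOf (c : ZMod p)) (k : ℕ) :
    0 < fp c k p := by
  have := Fact.mk hp
  rw [fp]
  split_ifs with hcase
  · have hge := padicValNat.pow_two_sub_one_ge hc (by omega) two_ne_zero even_two
    omega
  · exact one_le_padicValNat_of_dvd (Nat.sub_ne_zero_of_lt (Nat.one_lt_pow hord.ne' hc))
      ((orderOf_natCast_dvd_iff (zero_lt_one.trans hc)).mp dvd_rfl)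

end Valuation

section PowSubOne

variable {c k p : ℕ}

theorem isABCTriple_one_pow_iff (hc : 1 < c) (hk : k ≠ 0) :
    IsABCTriple 1 (c ^ k - 1) (c ^ k) ↔ rad c < cosocle (c ^ k - 1) := by
  have hpow : 1 < c ^ k := Nat.one_lt_pow hk hc
  have h := isABCTriple_one_iff (Nat.sub_pos_of_lt hpow)
  rwa [Nat.sub_add_cancel hpow.le, rad_pow c hk] at h

lemma cosocle_pow_sub_one_eq_prod (hc : 1 < c) (hk : k ≠ 0) :
    cosocle (c ^ k - 1) = ∏ p ∈ ordSet c k, p ^ (fp c k p + wp k p - 1) := by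
  rw [cosocle_eq_prod_primeFactors (Nat.sub_ne_zero_of_lt (Nat.one_lt_pow hk hc)),
    ← ordSet_eq_primeFactors (zero_lt_one.trans hc)]
  refine Finset.prod_congr rfl fun p hp => ?_
  obtain ⟨-, hp_prime, hord⟩ := Finset.mem_filter.mp hp
  rw [padicValNat_pow_sub_one_eq_fp_add_wp hp_prime hc hk hord]

lemma pow_le_cosocle_pow_sub_one (hp : p.Prime) (hc : 1 < c) (hk : k ≠ 0)
    (h : orderOf (c : ZMod p) ∣ k) : p ^ (fp c k p + wp k p - 1) ≤ cosocle (c ^ k - 1) := by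
  rw [← padicValNat_pow_sub_one_eq_fp_add_wp hp hc hk h]
  exact pow_padicValNat_sub_one_le_cosocle (Nat.mem_primeFactors.mpr
    ⟨hp, (orderOf_natCast_dvd_iff (zero_lt_one.trans hc)).mp h,
      Nat.sub_ne_zero_of_lt (Nat.one_lt_pow hk hc)⟩)

lemma lt_pow_of_sInf_le {r e : ℕ} (hp : 1 < p) (h : sInf {m : ℕ | 0 < m ∧ r < p ^ m} ≤ e) :
    r < p ^ e := by
  have hne : {m : ℕ | 0 < m ∧ r < p ^ m}.Nonempty :=
    ⟨r + 1, r.succ_pos, r.lt_succ_self.trans (Nat.lt_pow_self hp)⟩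
  exact (Nat.sInf_mem hne).2.trans_le (Nat.pow_le_pow_right hp.le h)

end PowSubOne

theorem stmt_9 (c k : ℕ) (hc : 1 < c) (hk : 0 < k) :
    IsABCTriple 1 (c ^ k - 1) (c ^ k) ↔
      ((∃ p : ℕ, p.Prime ∧ rad c < p ∧ orderOf (c : ZMod p) ∣ k ∧
          (2 ≤ fp c k p ∨ 1 ≤ wp k p)) ∨
       (∃ p : ℕ, p.Prime ∧ p < rad c ∧ orderOf (c : ZMod p) ∣ k ∧
          sInf {m : ℕ | 0 < m ∧ rad c < p ^ m} ≤ fp c k p + wp k p - 1) ∨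
       (∃ a : ℕ → ℕ, (∀ p : ℕ, p.Prime → orderOf (c : ZMod p) ∣ k →
            a p ≤ fp c k p + wp k p - 1) ∧
          rad c < ∏ p ∈ ordSet c k, p ^ a p)) := by
  rw [isABCTriple_one_pow_iff hc hk.ne']
  constructor
  · intro hlt
    rw [cosocle_pow_sub_one_eq_prod hc hk.ne'] at hlt
    exact .inr (.inr ⟨fun p => fp c k p + wp k p - 1, fun _ _ _ => le_rfl, hlt⟩)
  · rintro (⟨p, hp, hlt, hord, hexp⟩ | ⟨p, hp, -, hord, hexp⟩ | ⟨a, ha, hlt⟩)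
    · have hfp := fp_pos hp hc (Nat.pos_of_dvd_of_pos hord hk) k
      calc rad c < p := hlt
        _ ≤ p ^ (fp c k p + wp k p - 1) := Nat.le_self_pow (by omega) p
        _ ≤ cosocle (c ^ k - 1) := pow_le_cosocle_pow_sub_one hp hc hk.ne' hord
    · exact (lt_pow_of_sInf_le hp.one_lt hexp).trans_le
        (pow_le_cosocle_pow_sub_one hp hc hk.ne' hord)
    · rw [cosocle_pow_sub_one_eq_prod hc hk.ne']
      refine hlt.trans_le (Finset.prod_le_prod' fun p hp => ?_)
      obtain ⟨-, hp_prime, hord⟩ := Finset.mem_filter.mp hp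
      exact Nat.pow_le_pow_right hp_prime.pos (ha p hp_prime hord)
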